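/- (Two-sided alternative, upper bounds.) Assume N, M, n, m → ∞, p = n/N → 0, q = m/M → 0, and log(1/p)/m + log(1/q)/n → 0. If a²√(n m p q) → ∞ or liminf a²√(nm)/(2√(n log(1/p) + m log(1/q))) > 1, then the chi-square test ψ^z = max{ψ^z_lin, ψ^z_max} — with H → ∞ such that H < c·(a²/2)√(n m p q) for some fixed c ∈ (0,1), and T_{nm} = √((2+δ) log G_{nm}) for some sufficiently small δ > 0 — satisfies γ^±_{nm,a}(ψ^z) → 0. -/

import Mathlib

/-!
Everything rests on one exponential moment. If `Y ~ N(s, 1)` and `2 l < 1`, completing the square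
gives `E exp(l (Y² - 1)) = e^{-l} (1 - 2l)^{-1/2} exp(l s² / (1 - 2l))`, and for `|l| ≤ 1/4` this is
at most `exp(l² + 8 |l|³ + l s² / (1 - 2l))` (`chi_moment_le`). Taking products bounds the
exponential moment of `∑_{C} (Y_{ij}² - 1)` for every set `C` of cells (`pi_chi_moment_le`), and all
three error probabilities then follow from Chernoff's inequality.

* False alarms of the global statistic: with `K = NM` and `l = 1/(10 √(2K))` they have probability
  at most `exp(1 - H/10)`.
* False alarms of the scan: with `l = T/√(2nm)` a union bound over the `G` submatrices gives
  `G exp(-T²(1/2 - 4l))`. Since `log G ≤ n log(eN/n) + m log(eM/m) = o(nm)`, the tilt `l` tends to `0`, so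
  `T² = (2+δ) log G` makes this at most `G^{-δ/4}`, and `G ≥ N/n → ∞`.
* Missed signals: the condition on `H` says `2H√(NM) ≤ a² nm ≤ ∑ s_{ij}²`, so already the
  global statistic exceeds `H`; `l = -1/(10 √(2K))` bounds the miss probability by
  `exp(1 - H/100)`, uniformly over the alternative.

In particular, `H → ∞` together with the upper bound on `H` forces `a²√(nmpq) → ∞`, so the
global statistic alone controls the second-type error, and every `δ > 0` is admissible.
-/

open MeasureTheory ProbabilityTheory Filter Topology
open scoped Classical

noncomputable section

/-- Standard normal cumulative distribution function `Φ`. -/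
def Phi (x : ℝ) : ℝ := ((gaussianReal 0 1) (Set.Iic x)).toReal

/-- Law `P_S` of the `N × M` observation matrix `Y_{ij} = s_{ij} + ξ_{ij}`
with i.i.d. standard Gaussian noise. -/
def matLaw (N M : ℕ) (S : Fin N → Fin M → ℝ) : Measure ((Fin N × Fin M) → ℝ) :=
  Measure.pi fun ij => gaussianReal (S ij.1 ij.2) 1

/-- First-type error `α(ψ) = E_0 ψ`. -/
def alphaErr (N M : ℕ) (ψ : ((Fin N × Fin M) → ℝ) → ℝ) : ℝ :=
  ∫ y, ψ y ∂(matLaw N M fun _ _ => 0)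

/-- Second-type error `β(ψ, S) = E_S (1 - ψ)`. -/
def betaErr (N M : ℕ) (S : Fin N → Fin M → ℝ) (ψ : ((Fin N × Fin M) → ℝ) → ℝ) : ℝ :=
  ∫ y, (1 - ψ y) ∂(matLaw N M S)

/-- The alternative class `S_{nm,a}`: some `n × m` submatrix `C = A × B` has all entries `≥ a`,
and all other entries vanish. -/
def SAlt (N M n m : ℕ) (a : ℝ) : Set (Fin N → Fin M → ℝ) :=
  {S | ∃ (A : Finset (Fin N)) (B : Finset (Fin M)), A.card = n ∧ B.card = m ∧
      (∀ i j, i ∈ A → j ∈ B → a ≤ S i j) ∧ ∀ i j, ¬(i ∈ A ∧ j ∈ B) → S i j = 0}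

/-- Maximal second-type error `β_{nm,a}(ψ)`. -/
def betaMax (N M n m : ℕ) (a : ℝ) (ψ : ((Fin N × Fin M) → ℝ) → ℝ) : ℝ :=
  sSup ((fun S => betaErr N M S ψ) '' SAlt N M n m a)

/-- Linear statistic `t_lin`. -/
def tlin (N M : ℕ) (y : (Fin N × Fin M) → ℝ) : ℝ :=
  (∑ ij : Fin N × Fin M, y ij) / Real.sqrt ((N : ℝ) * M)

/-- Linear test `ψ^lin_H = 1{t_lin > H}`. -/
def psiLin (N M : ℕ) (H : ℝ) (y : (Fin N × Fin M) → ℝ) : ℝ :=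
  if H < tlin N M y then 1 else 0

/-- Normalized submatrix sum `Y_C` for `C = A × B`. -/
def YC (N M : ℕ) (y : (Fin N × Fin M) → ℝ)
    (A : Finset (Fin N)) (B : Finset (Fin M)) : ℝ :=
  (∑ i ∈ A, ∑ j ∈ B, y (i, j)) / Real.sqrt ((A.card : ℝ) * B.card)

/-- Scan statistic `t_max = max_{C ∈ C_{nm}} Y_C`. -/
def tmax (N M n m : ℕ) (y : (Fin N × Fin M) → ℝ) : ℝ :=
  sSup {v | ∃ (A : Finset (Fin N)) (B : Finset (Fin M)),
    A.card = n ∧ B.card = m ∧ v = YC N M y A B}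

/-- `G_{nm} = C(N,n) · C(M,m)`, the number of `n × m` submatrices. -/
def Gnm (N M n m : ℕ) : ℕ := N.choose n * M.choose m

/-- Threshold `T_{nm} = √(2 log G_{nm})`. -/
def Tnm (N M n m : ℕ) : ℝ := Real.sqrt (2 * Real.log (Gnm N M n m : ℝ))

/-- Scan test `ψ^max_T = 1{t_max > T}`. -/
def psiMax (N M n m : ℕ) (T : ℝ) (y : (Fin N × Fin M) → ℝ) : ℝ :=
  if T < tmax N M n m y then 1 else 0

/-- Two-sided alternative class `S^±_{nm,a}`. -/
def SAltTS (N M n m : ℕ) (a : ℝ) : Set (Fin N → Fin M → ℝ) :=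
  {S | ∃ (A : Finset (Fin N)) (B : Finset (Fin M)), A.card = n ∧ B.card = m ∧
      (∀ i j, i ∈ A → j ∈ B → a ≤ |S i j|) ∧ ∀ i j, ¬(i ∈ A ∧ j ∈ B) → S i j = 0}

/-- Maximal second-type error over the two-sided alternative. -/
def betaMaxTS (N M n m : ℕ) (a : ℝ) (ψ : ((Fin N × Fin M) → ℝ) → ℝ) : ℝ :=
  sSup ((fun S => betaErr N M S ψ) '' SAltTS N M n m a)

/-- Linear chi-square statistic `z_lin`. -/
def zlin (N M : ℕ) (y : (Fin N × Fin M) → ℝ) : ℝ :=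
  (∑ ij : Fin N × Fin M, ((y ij) ^ 2 - 1)) / Real.sqrt (2 * (N : ℝ) * M)

/-- Normalized chi-square submatrix statistic `Z_C`. -/
def ZCsq (N M : ℕ) (y : (Fin N × Fin M) → ℝ)
    (A : Finset (Fin N)) (B : Finset (Fin M)) : ℝ :=
  (∑ i ∈ A, ∑ j ∈ B, ((y (i, j)) ^ 2 - 1)) /
    Real.sqrt (2 * (A.card : ℝ) * B.card)

/-- Chi-square scan statistic `z_max`. -/
def zmax (N M n m : ℕ) (y : (Fin N × Fin M) → ℝ) : ℝ :=
  sSup {v | ∃ (A : Finset (Fin N)) (B : Finset (Fin M)),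
    A.card = n ∧ B.card = m ∧ v = ZCsq N M y A B}

/-- Chi-square test `ψ^z = max{ψ^z_lin, ψ^z_max}`. -/
def psiZsq (N M n m : ℕ) (H T : ℝ) (y : (Fin N × Fin M) → ℝ) : ℝ :=
  max (if H < zlin N M y then 1 else 0) (if T < zmax N M n m y then 1 else 0)

/-! ### Exponential moments of centred squares of Gaussians -/

lemma integral_chi_gaussian (s l : ℝ) (hl : 2 * l < 1) :
    ∫ y, Real.exp (l * (y ^ 2 - 1)) ∂(gaussianReal s 1) =
      Real.exp (-l + l * s ^ 2 / (1 - 2 * l)) * (Real.sqrt (1 - 2 * l))⁻¹ := by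
  have hk : 0 < 1 - 2 * l := by linarith
  set k : ℝ := 1 - 2 * l with hkdef
  let v : NNReal := ⟨k⁻¹, by positivity⟩
  have hv : v ≠ 0 := by
    intro h
    have : (v : ℝ) = 0 := by rw [h]; rfl
    exact (inv_pos.2 hk).ne' this
  have hvk : (v : ℝ) = k⁻¹ := rfl
  rw [integral_gaussianReal_eq_integral_smul one_ne_zero]
  -- completing the square: the tilted density is a multiple of that of `N(s/k, 1/k)`
  have key : ∀ y, gaussianPDFReal s 1 y • Real.exp (l * (y ^ 2 - 1)) =
      (Real.exp (-l + l * s ^ 2 / k) * (Real.sqrt k)⁻¹) * gaussianPDFReal (s / k) v y := by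
    intro y
    simp only [gaussianPDFReal, hvk, smul_eq_mul, NNReal.coe_one]
    have h1 : (Real.sqrt (2 * Real.pi * 1))⁻¹ =
        (Real.sqrt k)⁻¹ * (Real.sqrt (2 * Real.pi * k⁻¹))⁻¹ := by
      rw [← mul_inv, ← Real.sqrt_mul hk.le]
      congr 2
      field_simp
    have h2 : Real.exp (-(y - s) ^ 2 / (2 * 1)) * Real.exp (l * (y ^ 2 - 1)) =
        Real.exp (-l + l * s ^ 2 / k) * Real.exp (-(y - s / k) ^ 2 / (2 * k⁻¹)) := by
      rw [← Real.exp_add, ← Real.exp_add]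
      congr 1
      have hlk : l = (1 - k) / 2 := by rw [hkdef]; ring
      rw [hlk]
      field_simp
      ring
    rw [h1]
    linear_combination ((Real.sqrt k)⁻¹ * (Real.sqrt (2 * Real.pi * k⁻¹))⁻¹) * h2
  simp_rw [key]
  rw [integral_const_mul, integral_gaussianPDFReal_eq_one _ hv, mul_one]

lemma integrable_chi_gaussian (s l : ℝ) (hl : 2 * l < 1) :
    Integrable (fun y => Real.exp (l * (y ^ 2 - 1))) (gaussianReal s 1) := by
  apply Integrable.of_integral_ne_zero
  rw [integral_chi_gaussian s l hl]
  have hk : 0 < 1 - 2 * l := by linarith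
  positivity

/-- The leading constant `1` of `l²` is sharp; the threshold of the scan statistic needs it. -/
lemma chi_moment_le (s l : ℝ) (hl : |l| ≤ 1 / 4) :
    ∫ y, Real.exp (l * (y ^ 2 - 1)) ∂(gaussianReal s 1) ≤
      Real.exp (l ^ 2 + 8 * |l| ^ 3 + l / (1 - 2 * l) * s ^ 2) := by
  have hl' := abs_le.1 hl
  have hk : 0 < 1 - 2 * l := by linarith
  rw [integral_chi_gaussian s l (by linarith)]
  have hsq : (Real.sqrt (1 - 2 * l))⁻¹ = Real.exp (-(1 / 2) * Real.log (1 - 2 * l)) := by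
    rw [Real.sqrt_eq_rpow, Real.rpow_def_of_pos hk, ← Real.exp_neg]
    congr 1
    ring
  rw [hsq, ← Real.exp_add]
  apply Real.exp_le_exp.2
  have habs : |2 * l| = 2 * |l| := by rw [abs_mul]; norm_num
  have hlog := Real.abs_log_sub_add_sum_range_le (x := 2 * l) (by rw [habs]; linarith) 2
  rw [habs] at hlog
  have h3 : (2 * |l|) ^ (2 + 1) / (1 - 2 * |l|) ≤ 16 * |l| ^ 3 := by
    rw [div_le_iff₀ (by linarith)]
    have h3' : 0 ≤ |l| ^ 3 := by positivity
    have h4' : 0 ≤ |l| ^ 3 * (1 / 4 - |l|) := mul_nonneg h3' (by linarith)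
    linarith [show (2 * |l|) ^ (2 + 1) = 8 * |l| ^ 3 by ring,
      show 16 * |l| ^ 3 * (1 - 2 * |l|) = 8 * |l| ^ 3 + 32 * (|l| ^ 3 * (1 / 4 - |l|)) by ring]
  have h4 := (abs_le.1 (hlog.trans h3)).1
  simp only [Finset.sum_range_succ, Finset.sum_range_zero] at h4
  norm_num at h4
  have h5 : l * s ^ 2 / (1 - 2 * l) = l / (1 - 2 * l) * s ^ 2 := by ring
  rw [h5]
  nlinarith

lemma exp_chi_eq_prod {ι : Type*} [Fintype ι] (C : Finset ι) (l : ℝ) (y : ι → ℝ) :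
    Real.exp (l * ∑ i ∈ C, (y i ^ 2 - 1)) =
      ∏ i, (if i ∈ C then Real.exp (l * (y i ^ 2 - 1)) else 1) := by
  rw [Finset.prod_ite_mem, Finset.univ_inter, ← Real.exp_sum, Finset.mul_sum]

lemma integrable_pi_chi {ι : Type*} [Fintype ι] (C : Finset ι) (s : ι → ℝ) (l : ℝ)
    (hl : 2 * l < 1) :
    Integrable (fun y : ι → ℝ => Real.exp (l * ∑ i ∈ C, (y i ^ 2 - 1)))
      (Measure.pi fun i => gaussianReal (s i) 1) := by
  simp_rw [exp_chi_eq_prod]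
  refine Integrable.fintype_prod
    (f := fun i (z : ℝ) => if i ∈ C then Real.exp (l * (z ^ 2 - 1)) else 1) fun i => ?_
  by_cases h : i ∈ C
  · simpa [h] using integrable_chi_gaussian (s i) l hl
  · simp [h]

lemma pi_chi_moment_le {ι : Type*} [Fintype ι] (C : Finset ι) (s : ι → ℝ) (l : ℝ)
    (hl : |l| ≤ 1 / 4) :
    ∫ y : ι → ℝ, Real.exp (l * ∑ i ∈ C, (y i ^ 2 - 1)) ∂(Measure.pi fun i => gaussianReal (s i) 1)
      ≤ Real.exp (C.card * (l ^ 2 + 8 * |l| ^ 3) + l / (1 - 2 * l) * ∑ i ∈ C, s i ^ 2) := by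
  simp_rw [exp_chi_eq_prod]
  rw [integral_fintype_prod_eq_prod
    (f := fun i (z : ℝ) => if i ∈ C then Real.exp (l * (z ^ 2 - 1)) else 1)]
  have h1 : ∀ i, (∫ z, (if i ∈ C then Real.exp (l * (z ^ 2 - 1)) else 1) ∂(gaussianReal (s i) 1))
      = if i ∈ C then ∫ z, Real.exp (l * (z ^ 2 - 1)) ∂(gaussianReal (s i) 1) else 1 := by
    intro i
    by_cases h : i ∈ C <;> simp [h]
  simp_rw [h1]
  rw [Finset.prod_ite_mem, Finset.univ_inter]
  calc ∏ i ∈ C, ∫ z, Real.exp (l * (z ^ 2 - 1)) ∂(gaussianReal (s i) 1)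
      ≤ ∏ i ∈ C, Real.exp (l ^ 2 + 8 * |l| ^ 3 + l / (1 - 2 * l) * s i ^ 2) :=
        Finset.prod_le_prod (fun i _ => integral_nonneg fun z => (Real.exp_pos _).le)
          fun i _ => chi_moment_le (s i) l hl
    _ = _ := by
        rw [← Real.exp_sum, Finset.sum_add_distrib, Finset.sum_const, nsmul_eq_mul,
          Finset.mul_sum]

lemma integrable_chernoff {N M : ℕ} (S : Fin N → Fin M → ℝ) (C : Finset (Fin N × Fin M))
    (l x : ℝ) (hl : |l| ≤ 1 / 4) :
    Integrable (fun y => Real.exp (l * (∑ i ∈ C, (y i ^ 2 - 1) - x))) (matLaw N M S) := by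
  have h := (integrable_pi_chi C (fun ij => S ij.1 ij.2) l
    (by have := (abs_le.1 hl).2; linarith)).const_mul (Real.exp (-(l * x)))
  refine h.congr (ae_of_all _ fun y => ?_)
  simp only
  rw [← Real.exp_add]
  congr 1
  ring

lemma chernoff_le {N M : ℕ} (S : Fin N → Fin M → ℝ) (C : Finset (Fin N × Fin M))
    (l x : ℝ) (hl : |l| ≤ 1 / 4) :
    ∫ y, Real.exp (l * (∑ i ∈ C, (y i ^ 2 - 1) - x)) ∂(matLaw N M S) ≤
      Real.exp (-(l * x) + C.card * (l ^ 2 + 8 * |l| ^ 3) +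
        l / (1 - 2 * l) * ∑ ij ∈ C, S ij.1 ij.2 ^ 2) := by
  have h : ∀ y : Fin N × Fin M → ℝ, Real.exp (l * (∑ i ∈ C, (y i ^ 2 - 1) - x)) =
      Real.exp (-(l * x)) * Real.exp (l * ∑ i ∈ C, (y i ^ 2 - 1)) := by
    intro y
    rw [← Real.exp_add]
    congr 1
    ring
  simp_rw [h]
  rw [integral_const_mul, add_assoc, Real.exp_add]
  exact mul_le_mul_of_nonneg_left (pi_chi_moment_le C (fun ij => S ij.1 ij.2) l hl)
    (Real.exp_pos _).le

/-! ### Error bounds at a fixed sample size -/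

/-- The tilt `1 / (10 √(2K))` used for the global statistic with `K = NM` cells. -/
def linTilt (N M : ℕ) : ℝ := 1 / (10 * Real.sqrt (2 * (N : ℝ) * M))

lemma linTilt_facts (N M : ℕ) (hN : 1 ≤ N) (hM : 1 ≤ M) :
    0 < linTilt N M ∧ linTilt N M ≤ 1 / 10 ∧
      linTilt N M * Real.sqrt (2 * (N : ℝ) * M) = 1 / 10 ∧
      ((N : ℝ) * M) * (linTilt N M ^ 2 + 8 * linTilt N M ^ 3) ≤ 1 := by
  have hN' : (1 : ℝ) ≤ N := by exact_mod_cast hN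
  have hM' : (1 : ℝ) ≤ M := by exact_mod_cast hM
  have hK : (1 : ℝ) ≤ N * M := by nlinarith
  have hR : (1 : ℝ) ≤ Real.sqrt (2 * (N : ℝ) * M) := by
    rw [Real.one_le_sqrt]; nlinarith
  have hR2 : Real.sqrt (2 * (N : ℝ) * M) ^ 2 = 2 * N * M := Real.sq_sqrt (by positivity)
  have hpos : 0 < linTilt N M := by unfold linTilt; positivity
  have hmul : linTilt N M * Real.sqrt (2 * (N : ℝ) * M) = 1 / 10 := by
    unfold linTilt
    field_simp
  have hle : linTilt N M ≤ 1 / 10 := by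
    rw [← hmul]
    nlinarith
  refine ⟨hpos, hle, hmul, ?_⟩
  have h1 : ((N : ℝ) * M) * linTilt N M ^ 2 = 1 / 200 := by
    have : (linTilt N M * Real.sqrt (2 * (N : ℝ) * M)) ^ 2 = 1 / 100 := by rw [hmul]; norm_num
    rw [mul_pow, hR2] at this
    linarith
  have h2 : ((N : ℝ) * M) * (linTilt N M ^ 2 + 8 * linTilt N M ^ 3) =
      (((N : ℝ) * M) * linTilt N M ^ 2) * (1 + 8 * linTilt N M) := by ring
  rw [h2, h1]
  linarith

lemma psiZsq_nonneg (N M n m : ℕ) (H T : ℝ) (y) : 0 ≤ psiZsq N M n m H T y := by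
  unfold psiZsq
  exact le_max_of_le_left (by split_ifs <;> norm_num)

lemma psiZsq_le_one (N M n m : ℕ) (H T : ℝ) (y) : psiZsq N M n m H T y ≤ 1 := by
  unfold psiZsq
  exact max_le (by split_ifs <;> norm_num) (by split_ifs <;> norm_num)

/-- Exponential domination of the test by the quantities whose expectations are controlled;
it makes measurability of the test irrelevant. -/
lemma psiZsq_le (N M n m : ℕ) (hN : 1 ≤ N) (hM : 1 ≤ M) (hn : 1 ≤ n) (hm : 1 ≤ m)
    (H T l0 l1 : ℝ) (hT : 0 ≤ T) (hl0 : 0 ≤ l0) (hl1 : 0 ≤ l1) (y : Fin N × Fin M → ℝ) :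
    psiZsq N M n m H T y ≤
      Real.exp (l0 * (∑ ij ∈ Finset.univ, (y ij ^ 2 - 1) - H * Real.sqrt (2 * (N : ℝ) * M))) +
      ∑ P ∈ (Finset.univ.powersetCard n) ×ˢ (Finset.univ.powersetCard m),
        Real.exp (l1 * (∑ ij ∈ P.1 ×ˢ P.2, (y ij ^ 2 - 1) -
          T * Real.sqrt (2 * (n : ℝ) * m))) := by
  have hN' : (0 : ℝ) < N := by exact_mod_cast hN
  have hM' : (0 : ℝ) < M := by exact_mod_cast hM
  have hn' : (0 : ℝ) < n := by exact_mod_cast hn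
  have hm' : (0 : ℝ) < m := by exact_mod_cast hm
  have hsum : 0 ≤ ∑ P ∈ ((Finset.univ : Finset (Fin N)).powersetCard n) ×ˢ
        ((Finset.univ : Finset (Fin M)).powersetCard m),
        Real.exp (l1 * (∑ ij ∈ P.1 ×ˢ P.2, (y ij ^ 2 - 1) -
          T * Real.sqrt (2 * (n : ℝ) * m))) :=
    Finset.sum_nonneg fun _ _ => (Real.exp_pos _).le
  unfold psiZsq
  apply max_le
  · split_ifs with h
    · rw [zlin, lt_div_iff₀ (by positivity)] at h
      have : 1 ≤ Real.exp (l0 * (∑ ij ∈ Finset.univ, (y ij ^ 2 - 1) -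
          H * Real.sqrt (2 * (N : ℝ) * M))) :=
        Real.one_le_exp (mul_nonneg hl0 (by linarith))
      linarith
    · exact add_nonneg (Real.exp_pos _).le hsum
  · split_ifs with h
    · obtain ⟨A, B, hA, hB, hAB⟩ : ∃ A B, A.card = n ∧ B.card = m ∧ T < ZCsq N M y A B := by
        by_contra hcon
        push Not at hcon
        refine absurd h (not_lt.2 (Real.sSup_le ?_ hT))
        rintro v ⟨A, B, hA, hB, rfl⟩
        exact hcon A B hA hB
      rw [ZCsq, hA, hB, lt_div_iff₀ (by positivity), ← Finset.sum_product'] at hAB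
      have hone : 1 ≤ Real.exp (l1 * (∑ ij ∈ A ×ˢ B, (y ij ^ 2 - 1) -
          T * Real.sqrt (2 * (n : ℝ) * m))) :=
        Real.one_le_exp (mul_nonneg hl1 (by linarith))
      have hmem : (A, B) ∈ ((Finset.univ : Finset (Fin N)).powersetCard n) ×ˢ
          ((Finset.univ : Finset (Fin M)).powersetCard m) := by
        simp [Finset.mem_powersetCard, hA, hB]
      have := Finset.single_le_sum (f := fun P : Finset (Fin N) × Finset (Fin M) =>
        Real.exp (l1 * (∑ ij ∈ P.1 ×ˢ P.2, (y ij ^ 2 - 1) - T * Real.sqrt (2 * (n : ℝ) * m))))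
        (fun _ _ => (Real.exp_pos _).le) hmem
      have h0 := (Real.exp_pos (l0 * (∑ ij ∈ Finset.univ, (y ij ^ 2 - 1) -
        H * Real.sqrt (2 * (N : ℝ) * M)))).le
      simp only at this
      linarith
    · exact add_nonneg (Real.exp_pos _).le hsum

lemma alphaErr_le (N M n m : ℕ) (hN : 1 ≤ N) (hM : 1 ≤ M) (hn : 1 ≤ n) (hm : 1 ≤ m)
    (H T : ℝ) (hT : 0 ≤ T) (hTs : T / Real.sqrt (2 * (n : ℝ) * m) ≤ 1 / 4) :
    alphaErr N M (psiZsq N M n m H T) ≤ Real.exp (1 - H / 10) +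
      Gnm N M n m * Real.exp (-T ^ 2 * (1 / 2 - 4 * (T / Real.sqrt (2 * (n : ℝ) * m)))) := by
  obtain ⟨h0, h0', h0m, h0K⟩ := linTilt_facts N M hN hM
  have hn' : (0 : ℝ) < n := by exact_mod_cast hn
  have hm' : (0 : ℝ) < m := by exact_mod_cast hm
  set R := Real.sqrt (2 * (n : ℝ) * m) with hR
  have hRpos : 0 < R := by positivity
  have hR2 : R ^ 2 = 2 * n * m := Real.sq_sqrt (by positivity)
  set l := T / R with hl
  have hl0 : 0 ≤ l := by positivity
  have hlR : l * R = T := by rw [hl]; field_simp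
  have habs0 : |linTilt N M| ≤ 1 / 4 := by rw [abs_of_pos h0]; linarith
  have habs : |l| ≤ 1 / 4 := by rwa [abs_of_nonneg hl0]
  have hi0 := integrable_chernoff (fun (_ : Fin N) (_ : Fin M) => (0 : ℝ)) Finset.univ
    (linTilt N M) (H * Real.sqrt (2 * (N : ℝ) * M)) habs0
  have hi := fun P : Finset (Fin N) × Finset (Fin M) =>
    integrable_chernoff (fun (_ : Fin N) (_ : Fin M) => (0 : ℝ)) (P.1 ×ˢ P.2) l (T * R) habs
  have hisum := integrable_finsetSum ((Finset.univ.powersetCard n) ×ˢ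
    (Finset.univ.powersetCard m)) fun P _ => hi P
  unfold alphaErr
  refine (integral_mono_of_nonneg (ae_of_all _ fun y => psiZsq_nonneg N M n m H T y)
    (hi0.add hisum) (ae_of_all _ fun y =>
      psiZsq_le N M n m hN hM hn hm H T (linTilt N M) l hT h0.le hl0 y)).trans ?_
  simp only [Pi.add_apply]
  rw [integral_add hi0 hisum, integral_finsetSum _ fun P _ => hi P]
  apply add_le_add
  · refine (chernoff_le _ _ _ _ habs0).trans (Real.exp_le_exp.2 ?_)
    rw [abs_of_pos h0]
    simp only [Finset.card_univ, Fintype.card_prod, Fintype.card_fin, Nat.cast_mul]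
    have : linTilt N M * (H * Real.sqrt (2 * (N : ℝ) * M)) = H / 10 := by
      linear_combination H * h0m
    rw [this]
    simp only [ne_eq, OfNat.ofNat_ne_zero, not_false_eq_true, zero_pow, Finset.sum_const_zero,
      mul_zero]
    linarith
  · have hterm : ∀ P ∈ ((Finset.univ : Finset (Fin N)).powersetCard n) ×ˢ
        ((Finset.univ : Finset (Fin M)).powersetCard m),
        ∫ y, Real.exp (l * (∑ ij ∈ P.1 ×ˢ P.2, (y ij ^ 2 - 1) - T * R))
          ∂(matLaw N M fun _ _ => 0) ≤ Real.exp (-T ^ 2 * (1 / 2 - 4 * l)) := by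
      intro P hP
      rw [Finset.mem_product, Finset.mem_powersetCard, Finset.mem_powersetCard] at hP
      refine (chernoff_le _ _ _ _ habs).trans (Real.exp_le_exp.2 (le_of_eq ?_))
      rw [abs_of_nonneg hl0, Finset.card_product, hP.1.2, hP.2.2]
      simp only [ne_eq, OfNat.ofNat_ne_zero, not_false_eq_true, zero_pow, Finset.sum_const_zero,
        mul_zero]
      have hnm : (n : ℝ) * m = R ^ 2 / 2 := by rw [hR2]; ring
      push_cast
      rw [hnm, ← hlR]
      ring
    refine (Finset.sum_le_sum hterm).trans (le_of_eq ?_)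
    rw [Finset.sum_const, nsmul_eq_mul, Finset.card_product, Finset.card_powersetCard,
      Finset.card_powersetCard]
    simp [Gnm]

lemma betaErr_le (N M n m : ℕ) (hN : 1 ≤ N) (hM : 1 ≤ M)
    (a H T : ℝ) (ha : 0 ≤ a) (hH0 : 0 ≤ H)
    (hH : 2 * H * Real.sqrt ((N : ℝ) * M) ≤ a ^ 2 * (n * m))
    (S : Fin N → Fin M → ℝ) (hS : S ∈ SAltTS N M n m a) :
    betaErr N M S (psiZsq N M n m H T) ≤ Real.exp (1 - H / 100) := by
  obtain ⟨h0, h0', h0m, h0K⟩ := linTilt_facts N M hN hM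
  have hN' : (0 : ℝ) < N := by exact_mod_cast hN
  have hM' : (0 : ℝ) < M := by exact_mod_cast hM
  obtain ⟨A, B, hA, hB, hAB, -⟩ := hS
  have hs : a ^ 2 * (n * m) ≤ ∑ ij : Fin N × Fin M, S ij.1 ij.2 ^ 2 := by
    calc a ^ 2 * (n * m) = ∑ ij ∈ A ×ˢ B, a ^ 2 := by
          rw [Finset.sum_const, nsmul_eq_mul, Finset.card_product, hA, hB]; push_cast; ring
      _ ≤ ∑ ij ∈ A ×ˢ B, S ij.1 ij.2 ^ 2 := by
          refine Finset.sum_le_sum fun ij hij => ?_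
          rw [Finset.mem_product] at hij
          rw [← sq_abs (S ij.1 ij.2)]
          exact pow_le_pow_left₀ ha (hAB _ _ hij.1 hij.2) 2
      _ ≤ _ := Finset.sum_le_sum_of_subset_of_nonneg (Finset.subset_univ _)
          fun _ _ _ => sq_nonneg _
  have habs : |-linTilt N M| ≤ 1 / 4 := by rw [abs_neg, abs_of_pos h0]; linarith
  have hi := integrable_chernoff S Finset.univ (-linTilt N M)
    (H * Real.sqrt (2 * (N : ℝ) * M)) habs
  unfold betaErr
  refine (integral_mono_of_nonneg (ae_of_all _ fun y => ?_) hi (ae_of_all _ fun y => ?_)).trans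
    ((chernoff_le _ _ _ _ habs).trans (Real.exp_le_exp.2 ?_))
  · simpa using psiZsq_le_one N M n m H T y
  · simp only
    by_cases h : H < zlin N M y
    · have : 1 ≤ psiZsq N M n m H T y := by
        unfold psiZsq
        rw [if_pos h]
        exact le_max_left _ _
      have := (Real.exp_pos (-linTilt N M * (∑ i, (y i ^ 2 - 1) -
        H * Real.sqrt (2 * (N : ℝ) * M)))).le
      linarith
    · rw [not_lt, zlin, div_le_iff₀ (by positivity)] at h
      have h1 := psiZsq_nonneg N M n m H T y
      have : 1 ≤ Real.exp (-linTilt N M * (∑ i, (y i ^ 2 - 1) -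
          H * Real.sqrt (2 * (N : ℝ) * M))) :=
        Real.one_le_exp (by nlinarith)
      linarith
  · rw [abs_neg, abs_of_pos h0]
    simp only [Finset.card_univ, Fintype.card_prod, Fintype.card_fin, Nat.cast_mul]
    set l := linTilt N M
    set Q := ∑ ij : Fin N × Fin M, S ij.1 ij.2 ^ 2
    have e1 : -(-l * (H * Real.sqrt (2 * (N : ℝ) * M))) = H / 10 := by
      linear_combination H * h0m
    have hsplit : Real.sqrt (2 * (N : ℝ) * M) = Real.sqrt 2 * Real.sqrt ((N : ℝ) * M) := by
      rw [mul_assoc, Real.sqrt_mul (by norm_num)]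
    have h2 : (1.4 : ℝ) ≤ Real.sqrt 2 := Real.le_sqrt_of_sq_le (by norm_num)
    have h22 : Real.sqrt 2 ^ 2 = 2 := Real.sq_sqrt (by norm_num)
    -- `l Q ≥ 2 l H √(NM) = √2 H / 10`, which beats `(1 + 2l) H / 10 ≤ 1.2 H / 10`
    have hlQ : 0.14 * H ≤ l * Q := by
      have e2 : l * (2 * H * Real.sqrt ((N : ℝ) * M)) = Real.sqrt 2 * H / 10 := by
        have : Real.sqrt 2 * (l * Real.sqrt (2 * (N : ℝ) * M)) = Real.sqrt 2 * (1 / 10) := by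
          rw [h0m]
        rw [hsplit] at this
        linear_combination H * this - l * H * Real.sqrt ((N : ℝ) * M) * h22
      have e3 : l * (2 * H * Real.sqrt ((N : ℝ) * M)) ≤ l * Q :=
        mul_le_mul_of_nonneg_left (hH.trans hs) h0.le
      nlinarith
    have e4 : -l / (1 - 2 * -l) * Q ≤ -(0.11 * H) := by
      have : -l / (1 - 2 * -l) * Q = -(l * Q / (1 + 2 * l)) := by ring
      rw [this, neg_le_neg_iff, le_div_iff₀ (by linarith)]
      nlinarith
    have e5 : (-l) ^ 2 = l ^ 2 := by ring
    rw [e1, e5]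
    linarith

lemma betaMaxTS_bounds (N M n m : ℕ) (hN : 1 ≤ N) (hM : 1 ≤ M)
    (a H T : ℝ) (ha : 0 ≤ a) (hH0 : 0 ≤ H)
    (hH : 2 * H * Real.sqrt ((N : ℝ) * M) ≤ a ^ 2 * (n * m)) :
    0 ≤ betaMaxTS N M n m a (psiZsq N M n m H T) ∧
      betaMaxTS N M n m a (psiZsq N M n m H T) ≤ Real.exp (1 - H / 100) := by
  constructor
  · apply Real.sSup_nonneg
    rintro _ ⟨S, _, rfl⟩
    refine integral_nonneg fun y => ?_
    simpa using psiZsq_le_one N M n m H T y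
  · refine Real.sSup_le ?_ (Real.exp_pos _).le
    rintro _ ⟨S, hS, rfl⟩
    exact betaErr_le N M n m hN hM a H T ha hH0 hH S hS

/-! ### The number of submatrices -/

lemma div_le_choose (N n : ℕ) (hn : 1 ≤ n) (hnN : n ≤ N) : (N : ℝ) / n ≤ N.choose n := by
  obtain ⟨k, rfl⟩ : ∃ k, n = k + 1 := ⟨n - 1, by omega⟩
  obtain ⟨K, rfl⟩ : ∃ K, N = K + 1 := ⟨N - 1, by omega⟩
  rw [div_le_iff₀ (by positivity)]
  have h := Nat.add_one_mul_choose_eq K k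
  have hpos : 1 ≤ K.choose k := Nat.choose_pos (by omega)
  have : K + 1 ≤ (K + 1).choose (k + 1) * (k + 1) := by
    rw [← h]; exact Nat.le_mul_of_pos_right _ hpos
  exact_mod_cast this

lemma log_choose_le (N n : ℕ) (hn : 1 ≤ n) (hnN : n ≤ N) :
    Real.log (N.choose n) ≤ n * (1 + Real.log ((N : ℝ) / n)) := by
  have hn' : (0 : ℝ) < n := by exact_mod_cast hn
  have hN' : (0 : ℝ) < N := by exact_mod_cast (hn.trans hnN)
  have hc : (0 : ℝ) < N.choose n := by exact_mod_cast Nat.choose_pos hnN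
  rw [Real.log_le_iff_le_exp hc]
  have h1 : (N.choose n : ℝ) ≤ (N : ℝ) ^ n / n.factorial := Nat.choose_le_pow_div n N
  have h2 := Real.pow_div_factorial_le_exp (n : ℝ) hn'.le n
  have h3 : Real.exp (n * (1 + Real.log ((N : ℝ) / n))) = Real.exp n * ((N : ℝ) / n) ^ n := by
    rw [mul_add, mul_one, Real.exp_add, Real.exp_nat_mul, Real.exp_log (by positivity)]
  rw [h3]
  calc (N.choose n : ℝ) ≤ (N : ℝ) ^ n / n.factorial := h1
    _ = (n : ℝ) ^ n / n.factorial * ((N : ℝ) / n) ^ n := by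
        rw [div_pow]; field_simp
    _ ≤ _ := mul_le_mul_of_nonneg_right h2 (by positivity)

lemma log_Gnm_div_le (N M n m : ℕ) (hn : 1 ≤ n) (hnN : n ≤ N) (hm : 1 ≤ m) (hmM : m ≤ M) :
    Real.log (Gnm N M n m : ℝ) / (n * m) ≤ 1 / (m : ℝ) + 1 / (n : ℝ) +
      (Real.log ((N : ℝ) / n) / m + Real.log ((M : ℝ) / m) / n) := by
  have hn' : (0 : ℝ) < n := by exact_mod_cast hn
  have hm' : (0 : ℝ) < m := by exact_mod_cast hm
  have hc1 : (N.choose n : ℝ) ≠ 0 := by exact_mod_cast (Nat.choose_pos hnN).ne'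
  have hc2 : (M.choose m : ℝ) ≠ 0 := by exact_mod_cast (Nat.choose_pos hmM).ne'
  rw [Gnm, Nat.cast_mul, Real.log_mul hc1 hc2, div_le_iff₀ (by positivity)]
  have h1 := log_choose_le N n hn hnN
  have h2 := log_choose_le M m hm hmM
  have : (1 / (m : ℝ) + 1 / (n : ℝ) +
      (Real.log ((N : ℝ) / n) / m + Real.log ((M : ℝ) / m) / n)) * (n * m) =
      n * (1 + Real.log ((N : ℝ) / n)) + m * (1 + Real.log ((M : ℝ) / m)) := by
    field_simp
    ring
  linarith

lemma div_le_Gnm (N M n m : ℕ) (hn : 1 ≤ n) (hnN : n ≤ N) (hmM : m ≤ M) :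
    (N : ℝ) / n ≤ Gnm N M n m := by
  refine (div_le_choose N n hn hnN).trans ?_
  rw [Gnm]
  exact_mod_cast Nat.le_mul_of_pos_right _ (Nat.choose_pos hmM)

/-- Theorem 7 (two-sided alternative, upper bounds): if `a²√(nmpq) → ∞` or
`liminf a²√(nm)/(2√(n log(1/p)+m log(1/q))) > 1`, then the chi-square test
`ψ^z = max{ψ^z_lin, ψ^z_max}` with `H → ∞`, `H < c (a²/2)√(nmpq)` for some
`c ∈ (0,1)`, and `T_{nm} = √((2+δ) log G_{nm})` for sufficiently small `δ > 0`
satisfies `γ^±_{nm,a}(ψ^z) → 0`. -/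
theorem stmt12 (N M n m : ℕ → ℕ) (a H : ℕ → ℝ)
    (hb : ∀ t, 1 ≤ n t ∧ n t ≤ N t ∧ 1 ≤ m t ∧ m t ≤ M t)
    (ha : ∀ t, 0 < a t)
    (hN : Tendsto N atTop atTop) (hM : Tendsto M atTop atTop)
    (hn : Tendsto n atTop atTop) (hm : Tendsto m atTop atTop)
    (hp : Tendsto (fun t => (n t : ℝ) / N t) atTop (nhds 0))
    (hq : Tendsto (fun t => (m t : ℝ) / M t) atTop (nhds 0))
    (htend : Tendsto (fun t =>
        Real.log ((N t : ℝ) / n t) / m t + Real.log ((M t : ℝ) / m t) / n t)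
      atTop (nhds 0))
    (hH : Tendsto H atTop atTop)
    (hHc : ∃ c : ℝ, 0 < c ∧ c < 1 ∧ ∀ t,
      H t < c * (a t ^ 2 / 2 *
        Real.sqrt ((n t : ℝ) * m t * ((n t : ℝ) / N t) * ((m t : ℝ) / M t))))
    (hcond :
      Tendsto (fun t => a t ^ 2 *
          Real.sqrt ((n t : ℝ) * m t * ((n t : ℝ) / N t) * ((m t : ℝ) / M t)))
        atTop atTop ∨
      1 < Filter.liminf (fun t =>
          a t ^ 2 * Real.sqrt ((n t : ℝ) * m t) /
            (2 * Real.sqrt ((n t : ℝ) * Real.log ((N t : ℝ) / n t) +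
              (m t : ℝ) * Real.log ((M t : ℝ) / m t)))) atTop) :
    ∃ δ₀ : ℝ, 0 < δ₀ ∧ ∀ δ : ℝ, 0 < δ → δ ≤ δ₀ →
      Tendsto (fun t =>
        alphaErr (N t) (M t) (psiZsq (N t) (M t) (n t) (m t) (H t)
            (Real.sqrt ((2 + δ) * Real.log (Gnm (N t) (M t) (n t) (m t) : ℝ)))) +
          betaMaxTS (N t) (M t) (n t) (m t) (a t)
            (psiZsq (N t) (M t) (n t) (m t) (H t)
              (Real.sqrt ((2 + δ) * Real.log (Gnm (N t) (M t) (n t) (m t) : ℝ)))))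
        atTop (nhds 0) := by
  obtain ⟨c, hc0, hc1, hHlt⟩ := hHc
  refine ⟨1, one_pos, fun δ hδ _ => ?_⟩
  set L : ℕ → ℝ := fun t => Real.log (Gnm (N t) (M t) (n t) (m t) : ℝ) with hLdef
  set T : ℕ → ℝ := fun t => Real.sqrt ((2 + δ) * L t) with hTdef
  have hG1 : ∀ t, (1 : ℝ) ≤ (Gnm (N t) (M t) (n t) (m t) : ℝ) := by
    intro t
    obtain ⟨h1, h2, h3, h4⟩ := hb t
    rw [Gnm]
    exact_mod_cast Nat.mul_pos (Nat.choose_pos h2) (Nat.choose_pos h4)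
  have hL0 : ∀ t, 0 ≤ L t := fun t => Real.log_nonneg (hG1 t)
  have hnR : Tendsto (fun t => (n t : ℝ)) atTop atTop := tendsto_natCast_atTop_atTop.comp hn
  have hmR : Tendsto (fun t => (m t : ℝ)) atTop atTop := tendsto_natCast_atTop_atTop.comp hm
  have hLtop : Tendsto L atTop atTop := by
    have h1 : Tendsto (fun t => (N t : ℝ) / n t) atTop atTop := by
      have h : Tendsto (fun t => ((n t : ℝ) / N t)⁻¹) atTop atTop := by
        refine Tendsto.inv_tendsto_nhdsGT_zero (tendsto_nhdsWithin_iff.2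
          ⟨hp, Eventually.of_forall fun t => ?_⟩)
        obtain ⟨h1, h2, h3, h4⟩ := hb t
        have : (0 : ℝ) < n t := by exact_mod_cast h1
        have : (0 : ℝ) < N t := by exact_mod_cast h1.trans h2
        exact Set.mem_Ioi.2 (by positivity)
      simpa only [inv_div] using h
    refine Real.tendsto_log_atTop.comp (tendsto_atTop_mono (fun t => ?_) h1)
    obtain ⟨h1, h2, h3, h4⟩ := hb t
    exact div_le_Gnm _ _ _ _ h1 h2 h4
  have hLnm : Tendsto (fun t => L t / (n t * m t)) atTop (nhds 0) := by
    have hup : Tendsto (fun t => 1 / (m t : ℝ) + 1 / (n t : ℝ) +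
        (Real.log ((N t : ℝ) / n t) / m t + Real.log ((M t : ℝ) / m t) / n t))
        atTop (nhds 0) := by
      have h1 : Tendsto (fun t => 1 / (m t : ℝ)) atTop (nhds 0) := by
        exact tendsto_const_nhds.div_atTop hmR
      have h2 : Tendsto (fun t => 1 / (n t : ℝ)) atTop (nhds 0) := by
        exact tendsto_const_nhds.div_atTop hnR
      simpa using (h1.add h2).add htend
    refine squeeze_zero (fun t => div_nonneg (hL0 t) (by positivity)) (fun t => ?_) hup
    obtain ⟨h1, h2, h3, h4⟩ := hb t
    exact log_Gnm_div_le _ _ _ _ h1 h2 h3 h4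
  have htilt : Tendsto (fun t => T t / Real.sqrt (2 * (n t : ℝ) * m t)) atTop (nhds 0) := by
    have h := (hLnm.const_mul ((2 + δ) / 2)).sqrt
    rw [mul_zero, Real.sqrt_zero] at h
    refine h.congr fun t => ?_
    rw [hTdef, ← Real.sqrt_div (mul_nonneg (by linarith) (hL0 t))]
    congr 1
    obtain ⟨h1, h2, h3, h4⟩ := hb t
    have : (n t : ℝ) ≠ 0 := by exact_mod_cast (by omega : n t ≠ 0)
    have : (m t : ℝ) ≠ 0 := by exact_mod_cast (by omega : m t ≠ 0)
    field_simp
  have hexp : ∀ {f : ℕ → ℝ} (k : ℝ), 0 < k → Tendsto f atTop atTop →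
      Tendsto (fun t => Real.exp (1 - f t / k)) atTop (nhds 0) := by
    intro f k hk hf
    refine Real.tendsto_exp_atBot.comp ?_
    have h1 : Tendsto (fun t => f t / k) atTop atTop := hf.atTop_div_const hk
    exact tendsto_const_nhds.add_atBot (tendsto_neg_atTop_atBot.comp h1)
  have hscan : Tendsto (fun t => Real.exp (-(δ / 4 * L t))) atTop (nhds 0) :=
    Real.tendsto_exp_atBot.comp
      (tendsto_neg_atTop_atBot.comp (hLtop.const_mul_atTop (by positivity)))
  have hbound : Tendsto (fun t => Real.exp (1 - H t / 10) + Real.exp (-(δ / 4 * L t)) +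
      Real.exp (1 - H t / 100)) atTop (nhds 0) := by
    simpa using ((hexp 10 (by norm_num) hH).add hscan).add (hexp 100 (by norm_num) hH)
  -- the cubic term of the scan exponent costs at most half of the margin `δ/2`
  have hε : 0 < min (1 / 4) (δ / (16 * (2 + δ))) := by positivity
  have hsm := htilt.eventually (gt_mem_nhds hε)
  have hkey : ∀ᶠ t in atTop,
      alphaErr (N t) (M t) (psiZsq (N t) (M t) (n t) (m t) (H t) (T t)) ≤
        Real.exp (1 - H t / 10) + Real.exp (-(δ / 4 * L t)) ∧
      0 ≤ betaMaxTS (N t) (M t) (n t) (m t) (a t)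
        (psiZsq (N t) (M t) (n t) (m t) (H t) (T t)) ∧
      betaMaxTS (N t) (M t) (n t) (m t) (a t)
        (psiZsq (N t) (M t) (n t) (m t) (H t) (T t)) ≤ Real.exp (1 - H t / 100) := by
    filter_upwards [hsm, hH.eventually_ge_atTop 0] with t ht hH0
    obtain ⟨h1, h2, h3, h4⟩ := hb t
    have hN1 := h1.trans h2
    have hM1 := h3.trans h4
    have ht1 := ht.trans_le (min_le_left _ _)
    have ht2 := ht.trans_le (min_le_right _ _)
    have hn' : (0 : ℝ) < n t := by exact_mod_cast h1
    have hm' : (0 : ℝ) < m t := by exact_mod_cast h3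
    have hN' : (0 : ℝ) < N t := by exact_mod_cast hN1
    have hM' : (0 : ℝ) < M t := by exact_mod_cast hM1
    refine ⟨(alphaErr_le _ _ _ _ hN1 hM1 h1 h3 (H t) (T t) (Real.sqrt_nonneg _) ht1.le).trans
      (add_le_add le_rfl ?_), betaMaxTS_bounds _ _ _ _ hN1 hM1 _ _ _ (ha t).le hH0 ?_⟩
    · have hGe : (Gnm (N t) (M t) (n t) (m t) : ℝ) = Real.exp (L t) :=
        (Real.exp_log (by linarith [hG1 t])).symm
      rw [hGe, ← Real.exp_add]
      apply Real.exp_le_exp.2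
      have hT2 : T t ^ 2 = (2 + δ) * L t := Real.sq_sqrt (mul_nonneg (by linarith) (hL0 t))
      rw [hT2]
      set u := T t / Real.sqrt (2 * (n t : ℝ) * m t)
      have hu : u * (16 * (2 + δ)) ≤ δ := ((lt_div_iff₀ (by positivity)).1 ht2).le
      nlinarith [mul_le_mul_of_nonneg_right hu (hL0 t)]
    · have hsq : Real.sqrt ((n t : ℝ) * m t * ((n t : ℝ) / N t) * ((m t : ℝ) / M t)) =
          n t * m t / Real.sqrt ((N t : ℝ) * M t) := by
        rw [show (n t : ℝ) * m t * ((n t : ℝ) / N t) * ((m t : ℝ) / M t) =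
          (n t * m t) ^ 2 / (N t * M t) by field_simp, Real.sqrt_div (by positivity),
          Real.sqrt_sq (by positivity)]
      have h := hHlt t
      rw [hsq] at h
      have hR : 0 < Real.sqrt ((N t : ℝ) * M t) := by positivity
      have hX : 0 ≤ a t ^ 2 / 2 * (n t * m t / Real.sqrt ((N t : ℝ) * M t)) := by positivity
      have h' : H t ≤ a t ^ 2 / 2 * (n t * m t / Real.sqrt ((N t : ℝ) * M t)) := by nlinarith
      have e : a t ^ 2 / 2 * (n t * m t / Real.sqrt ((N t : ℝ) * M t)) =
          (a t ^ 2 * (n t * m t) / 2) / Real.sqrt ((N t : ℝ) * M t) := by ring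
      rw [e, le_div_iff₀ hR] at h'
      linarith
  refine squeeze_zero' ?_ ?_ hbound
  · filter_upwards [hkey] with t ht
    exact add_nonneg (integral_nonneg fun y => psiZsq_nonneg _ _ _ _ _ _ y) ht.2.1
  · filter_upwards [hkey] with t ht
    exact add_le_add ht.1 ht.2.2
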